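/- Let α = (α_1,…,α_n) be a composition and 1 ≤ m < |α| where |α| = α_1 + … + α_n. The skew diagram δ_α/(1^m) is a sum of fat staircases if and only if there is no index j with α_j ≤ m ≤ |α| − α_{j+1}. -/

import Mathlib

/-!
By the Pieri rule, the partitions `ν` occurring in `s_{λ/(1^m)}` are exactly those obtained from
`λ` by removing one cell from each of `m` rows. This is read off the Littlewood–Richardson rule
(`pieri_forward`, `pieri_backward`): in a lattice tableau of shape `λ/(1^m)` every cell outside the
first column carries its row index, and the remaining first column is a strictly increasing list of
`ℓ(λ) - m` row indices, namely of the rows which keep all their cells. Conversely any such list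
whose resulting content is a partition gives a lattice tableau.

A partition is a fat staircase iff consecutive parts, trailing zeros included, differ by at most `1`
(`isFatStaircase_iff`). Let `λ = δ_α`, which has `α_j` rows of length `j`. If removing one cell from
each of the rows in a set `B`, with `|B| = m`, leaves a partition with a drop of at least two, then
this drop is at the border between the blocks of rows of length `j + 1` and `j`, and since the result
is a partition, `B` contains the whole block of length `j` and avoids the whole block of length
`j + 1`; hence `α_j ≤ m ≤ |α| - α_{j+1}`. Conversely, under these inequalities such a set `B`
exists, meeting every block of equal rows in a bottom segment (`exists_rows`), and it produces a
partition that is not a fat staircase.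
-/

open Finset

/-- A diagram is a finite set of cells `(row, column)`. -/
abbrev Diagram := Finset (ℕ × ℕ)

def ht (D : Diagram) : ℕ := D.sup (fun c => c.1 + 1)
def wd (D : Diagram) : ℕ := D.sup (fun c => c.2 + 1)

/-- A semistandard Young tableau of shape `D` (entries are 0-based: the paper's
value `v` corresponds to the entry `v - 1`). -/
structure SSYT (D : Diagram) where
  entry : ℕ × ℕ → ℕ
  rowWeak : ∀ i j, (i, j) ∈ D → (i, j + 1) ∈ D → entry (i, j) ≤ entry (i, j + 1)
  colStrict : ∀ i j, (i, j) ∈ D → (i + 1, j) ∈ D → entry (i, j) < entry (i + 1, j)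
  zero_outside : ∀ c, c ∉ D → entry c = 0

/-- The content of a tableau: `content T v` is the number of cells with entry `v`. -/
noncomputable def content {D : Diagram} (T : SSYT D) : ℕ →₀ ℕ := ∑ c ∈ D, Finsupp.single (T.entry c) 1

/-- `c'` is read before (or equal to) `c` in the reading word:
rows top to bottom, each row right to left. -/
def ReadBefore (c' c : ℕ × ℕ) : Prop := c'.1 < c.1 ∨ (c'.1 = c.1 ∧ c.2 ≤ c'.2)

instance (c' c : ℕ × ℕ) : Decidable (ReadBefore c' c) := by
  unfold ReadBefore; infer_instance

/-- The reading word of `T` is lattice. -/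
def IsLattice {D : Diagram} (T : SSYT D) : Prop :=
  ∀ c ∈ D, ∀ v : ℕ,
    (D.filter (fun c' => ReadBefore c' c ∧ T.entry c' = v + 1)).card ≤
    (D.filter (fun c' => ReadBefore c' c ∧ T.entry c' = v)).card

/-- The skew Schur function of a diagram, as a power series in `x_0, x_1, …`:
the coefficient of the monomial with exponents `d` is the number of SSYT of
shape `D` and content `d`. -/
noncomputable def schurOf (D : Diagram) : MvPowerSeries ℕ ℤ :=
  fun d => (Nat.card {T : SSYT D // content T = d} : ℤ)

/-- Number of lattice SSYT of shape `D` and content `d`. -/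
noncomputable def lrCount (D : Diagram) (d : ℕ →₀ ℕ) : ℕ :=
  Nat.card {T : SSYT D // IsLattice T ∧ content T = d}

/-- Littlewood–Richardson coefficient `c^lam_{mu, d}` (Littlewood–Richardson rule). -/
noncomputable def lrCoeff (lam mu : YoungDiagram) (d : ℕ →₀ ℕ) : ℕ :=
  lrCount (lam.cells \ mu.cells) d

def diagramOfRows (L : List ℕ) : Diagram :=
  (Finset.range L.length).biUnion (fun i => (Finset.range (L.getD i 0)).image (fun j => (i, j)))

/-- The row lengths of the fat staircase `δ_α`. -/
def staircaseRows (α : List ℕ) : List ℕ :=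
  ((List.range α.length).reverse.map (fun i => List.replicate (α.getD i 0) (i + 1))).flatten

/-- The fat staircase `δ_α = (n^{α_n}, …, 1^{α_1})` for `α = (α_1, …, α_n)`. -/
def fatStaircase (α : List ℕ) : Diagram := diagramOfRows (staircaseRows α)

/-- 180 degree rotation of a diagram. -/
def rotD (D : Diagram) : Diagram :=
  D.image (fun c => (ht D - 1 - c.1, wd D - 1 - c.2))

/-- The sequence of row lengths of a diagram, as a finitely supported function. -/
noncomputable def rowContent (D : Diagram) : ℕ →₀ ℕ := ∑ c ∈ D, Finsupp.single c.1 1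

/-- A content (partition) `d` is a fat staircase. -/
def IsFatStaircase (d : ℕ →₀ ℕ) : Prop :=
  ∃ α : List ℕ, (∀ a ∈ α, 0 < a) ∧ d = rowContent (fatStaircase α)

/-- Every Schur function appearing in the expansion of `s_D` is indexed by a fat staircase. -/
def IsSumOfFatStaircases (D : Diagram) : Prop :=
  ∀ d, lrCount D d ≠ 0 → IsFatStaircase d

/-- Near-concatenation of depth `i`. -/
def nearConcat (i : ℕ) (D1 D2 : Diagram) : Diagram :=
  D1.image (fun c => (c.1 + (ht D2 - i), c.2)) ∪ D2.image (fun c => (c.1, c.2 + wd D1))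

/-- Direct sum of diagrams. -/
def directSum (D1 D2 : Diagram) : Diagram := nearConcat 0 D1 D2

/-- A single column of `l` boxes. -/
def colD (l : ℕ) : Diagram := (Finset.range l).image (fun i => (i, 0))

/-- A single row of `m` boxes. -/
def rowD (m : ℕ) : Diagram := (Finset.range m).image (fun j => (0, j))

def colLenAt (D : Diagram) (j : ℕ) : ℕ := (D.filter (fun c => c.2 = j)).card
noncomputable def leftCol (D : Diagram) : ℕ := sInf {j | ∃ i, (i, j) ∈ D}
noncomputable def blCol (D : Diagram) : ℕ := sInf {j | (ht D - 1, j) ∈ D}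
noncomputable def topRow (D : Diagram) : ℕ := sInf {i | ∃ j, (i, j) ∈ D}
noncomputable def tlCol (D : Diagram) : ℕ := sInf {j | (topRow D, j) ∈ D}
def lastRowLen (D : Diagram) : ℕ := (D.filter (fun c => c.1 = ht D - 1)).card

/-- `S(F, E; k)`: the foundation `F` is placed immediately below `E`, with the
first row of `F` beginning one box below and `k` boxes left of the bottom-left
box of `E`. -/
noncomputable def SDiagG (F E : Diagram) (k : ℕ) : Diagram :=
  E.image (fun c => (c.1, c.2 + tlCol F + k)) ∪
  F.image (fun c => (c.1 + ht E, c.2 + blCol E))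

/-- `S(λ, μ, E; k)` with foundation the skew diagram `λ/μ`. -/
noncomputable def SDiag (lam mu : YoungDiagram) (E : Diagram) (k : ℕ) : Diagram :=
  SDiagG (lam.cells \ mu.cells) E k

/-- The set `R_{α,k}` (values as in the paper, i.e. 1-based). -/
def Rset (α : List ℕ) (k : ℕ) : Set ℕ :=
  {v | ∃ j, 1 ≤ j ∧ j ≤ α.length ∧ v = 1 + (α.drop (α.length - j)).sum} ∪
  {v | v = 1 ∧ 0 < k}

def rectD (a b : ℕ) : Diagram := Finset.range a ×ˢ Finset.range b

/-- The complement `D^c` of `D` in the `a × b` rectangle: the 180 degree rotation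
of the set-theoretic complement of `D` in the rectangle. -/
def complD (a b : ℕ) (D : Diagram) : Diagram :=
  (rectD a b \ D).image (fun c => (a - 1 - c.1, b - 1 - c.2))

def IsSkewDiagram (D : Diagram) : Prop :=
  ∃ lam mu : YoungDiagram, mu ≤ lam ∧ D = lam.cells \ mu.cells

def diagramOfF (d : ℕ →₀ ℕ) : Diagram :=
  d.support.biUnion (fun i => (Finset.range (d i)).image (fun j => (i, j)))

/-- A symmetric function is Schur-positive when it is a nonnegative integer
combination of Schur functions of partitions. -/
def SchurPositive (f : MvPowerSeries ℕ ℤ) : Prop :=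
  ∃ (S : Finset (ℕ →₀ ℕ)) (a : (ℕ →₀ ℕ) → ℕ),
    (∀ d ∈ S, ∀ i, d (i + 1) ≤ d i) ∧
    f = ∑ d ∈ S, (a d : ℤ) • schurOf (diagramOfF d)

def AdjCell (c c' : ℕ × ℕ) : Prop :=
  (c.1 = c'.1 ∧ (c.2 + 1 = c'.2 ∨ c'.2 + 1 = c.2)) ∨
  (c.2 = c'.2 ∧ (c.1 + 1 = c'.1 ∨ c'.1 + 1 = c.1))

def ConnectedDiagram (D : Diagram) : Prop :=
  ∀ c ∈ D, ∀ c' ∈ D, Relation.ReflTransGen (fun a b => a ∈ D ∧ b ∈ D ∧ AdjCell a b) c c'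

/-! ### The row lengths of a fat staircase -/

/-- The length of row `i` of the fat staircase `δ_α`; it is `0` below the last row. -/
def stairRow (α : List ℕ) (i : ℕ) : ℕ := (staircaseRows α).getD i 0

/-- Rows of length `n + 1` come first, so that `δ_α` can be built by appending entries to `α`. -/
lemma staircaseRows_append (α : List ℕ) (a : ℕ) :
    staircaseRows (α ++ [a]) = List.replicate a (α.length + 1) ++ staircaseRows α := by
  unfold staircaseRows
  simp only [List.length_append, List.length_singleton, List.range_succ, List.reverse_append,
    List.reverse_singleton, List.singleton_append, List.map_cons, List.flatten_cons]
  congr 1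
  · simp
  · congr 1
    apply List.map_congr_left
    intro i hi
    have : i < α.length := by simpa using hi
    rw [List.getD_append _ _ _ _ this]

lemma stairRow_append (α : List ℕ) (a i : ℕ) :
    stairRow (α ++ [a]) i = if i < a then α.length + 1 else stairRow α (i - a) := by
  unfold stairRow
  rw [staircaseRows_append]
  split_ifs with h
  · rw [List.getD_append _ _ _ _ (by simpa using h)]
    simp [List.getD_eq_getElem?_getD, h]
  · rw [List.getD_append_right _ _ _ _ (by simpa using h)]
    simp

lemma stairRow_nil (i : ℕ) : stairRow [] i = 0 := by
  simp [stairRow, staircaseRows]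

lemma length_staircaseRows (α : List ℕ) : (staircaseRows α).length = α.sum := by
  induction α using List.reverseRecOn with
  | nil => simp [staircaseRows]
  | append_singleton α a ih => rw [staircaseRows_append]; simp [ih]; omega

lemma stairRow_zero (α : List ℕ) (hα : ∀ a ∈ α, 0 < a) : stairRow α 0 = α.length := by
  rcases List.eq_nil_or_concat α with rfl | ⟨β, a, rfl⟩
  · simp [stairRow_nil]
  · have : 0 < a := hα a (by simp)
    simp [stairRow_append, this]

lemma stairRow_pos_iff (α : List ℕ) (i : ℕ) : 0 < stairRow α i ↔ i < α.sum := by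
  induction α using List.reverseRecOn generalizing i with
  | nil => simp [stairRow_nil]
  | append_singleton α a ih =>
    rw [stairRow_append]
    simp only [List.sum_append, List.sum_singleton]
    split_ifs with h
    · constructor <;> intros <;> omega
    · rw [ih]; omega

lemma stairRow_step (α : List ℕ) (hα : ∀ a ∈ α, 0 < a) (i : ℕ) :
    stairRow α (i + 1) ≤ stairRow α i ∧ stairRow α i ≤ stairRow α (i + 1) + 1 := by
  induction α using List.reverseRecOn generalizing i with
  | nil => simp [stairRow_nil]
  | append_singleton α a ih =>
    have hα' : ∀ a ∈ α, 0 < a := fun x hx => hα x (by simp [hx])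
    have h0 := stairRow_zero α hα'
    rw [stairRow_append, stairRow_append]
    rcases lt_trichotomy (i + 1) a with h | h | h
    · rw [if_pos h, if_pos (by omega)]; omega
    · rw [if_neg (by omega), if_pos (by omega), show i + 1 - a = 0 by omega, h0]; omega
    · rw [if_neg (by omega), if_neg (by omega), show i + 1 - a = (i - a) + 1 by omega]
      exact ih hα' _

/-- `δ_α` has exactly `α_{k+1}` rows of length `k + 1` (the list `α` is indexed from `0`). -/
lemma card_stairRow_eq (α : List ℕ) (k : ℕ) :
    ((range α.sum).filter (fun i => stairRow α i = k + 1)).card = α.getD k 0 := by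
  induction α using List.reverseRecOn with
  | nil => simp
  | append_singleton α a ih =>
    have hs : (α ++ [a]).sum = a + α.sum := by simp; omega
    rw [hs, card_filter, sum_range_add]
    have h1 : ∀ x, stairRow (α ++ [a]) (a + x) = stairRow α x := by
      intro x; rw [stairRow_append, if_neg (by omega), Nat.add_sub_cancel_left]
    have h2 : ∑ x ∈ range a, (if stairRow (α ++ [a]) x = k + 1 then 1 else 0)
        = if α.length = k then a else 0 := by
      rw [sum_congr rfl (g := fun _ => if α.length = k then 1 else 0)]
      · simp
      · intro x hx
        rw [stairRow_append, if_pos (mem_range.1 hx)]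
        simp
    simp only [h1]
    rw [h2, ← card_filter, ih]
    rcases lt_trichotomy k α.length with h | h | h
    · rw [if_neg (by omega), List.getD_append _ _ _ _ h, zero_add]
    · subst h
      rw [List.getD_append_right _ _ _ _ le_rfl]
      simp
    · rw [if_neg (by omega), List.getD_eq_default _ _ h.le, List.getD_eq_default]
      simp; omega

lemma mem_fatStaircase (α : List ℕ) (i j : ℕ) :
    (i, j) ∈ fatStaircase α ↔ j < stairRow α i := by
  unfold fatStaircase diagramOfRows
  simp only [mem_biUnion, mem_range, mem_image, Prod.mk.injEq]
  constructor
  · rintro ⟨i', -, j', h, rfl, rfl⟩; exact h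
  · intro h
    refine ⟨i, ?_, j, h, rfl, rfl⟩
    rw [length_staircaseRows, ← stairRow_pos_iff]; omega

lemma rowContent_fatStaircase (α : List ℕ) (v : ℕ) :
    rowContent (fatStaircase α) v = stairRow α v := by
  unfold rowContent
  simp only [Finsupp.finsetSum_apply, Finsupp.single_apply]
  rw [← card_filter]
  have : (fatStaircase α).filter (fun c => c.1 = v)
      = (range (stairRow α v)).image (fun j => (v, j)) := by
    ext ⟨i, j⟩
    simp only [mem_filter, mem_fatStaircase, mem_image, mem_range, Prod.mk.injEq]
    constructor
    · rintro ⟨h, rfl⟩; exact ⟨j, h, rfl, rfl⟩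
    · rintro ⟨j', h, rfl, rfl⟩; exact ⟨h, rfl⟩
  rw [this, card_image_of_injective _ (fun a b h => by simpa using h), card_range]

/-- A weakly decreasing, eventually zero sequence with all drops at most `1` lists the row lengths
of a fat staircase. The rows are added one by one, from the bottom up. -/
lemma exists_stairRow (N : ℕ) : ∀ f : ℕ → ℕ, (∀ i, N ≤ i → f i = 0) →
    (∀ i, f (i + 1) ≤ f i ∧ f i ≤ f (i + 1) + 1) →
    ∃ α : List ℕ, (∀ a ∈ α, 0 < a) ∧ ∀ i, f i = stairRow α i := by
  induction N with
  | zero => exact fun f hf _ => ⟨[], by simp, fun i => by rw [stairRow_nil, hf i (by omega)]⟩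
  | succ N ih =>
    intro f hf hs
    obtain ⟨α, hα, h⟩ := ih (fun i => f (i + 1)) (fun i hi => hf _ (by omega)) (fun i => hs _)
    have h0 : f 1 = α.length := by rw [← stairRow_zero α hα]; exact h 0
    have hs0 := hs 0
    rw [zero_add, h0] at hs0
    rcases (by omega : f 0 = α.length + 1 ∨ f 0 = α.length) with h1 | h1
    · refine ⟨α ++ [1], by simpa [or_imp, forall_and] using hα, fun i => ?_⟩
      rw [stairRow_append]
      cases i with
      | zero => simpa using h1
      | succ i => simpa using h i
    · rcases List.eq_nil_or_concat α with rfl | ⟨β, a, rfl⟩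
      · refine ⟨[], by simp, fun i => ?_⟩
        cases i with
        | zero => simpa [stairRow_nil] using h1
        | succ i => simpa [stairRow_nil] using h i
      · refine ⟨β ++ [a + 1], ?_, fun i => ?_⟩
        · intro x hx
          rcases List.mem_append.1 hx with hx | hx
          · exact hα x (by simp [hx])
          · simp at hx; omega
        · rw [stairRow_append]
          cases i with
          | zero => simpa using h1
          | succ i =>
            have := h i
            simp only [List.concat_eq_append, stairRow_append] at this
            simp [this]

/-- The intrinsic description of fat staircases used throughout: partitions whose consecutive parts,
including the trailing zeros, differ by at most `1`. -/
lemma isFatStaircase_iff (d : ℕ →₀ ℕ) :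
    IsFatStaircase d ↔ ∀ i, d (i + 1) ≤ d i ∧ d i ≤ d (i + 1) + 1 := by
  constructor
  · rintro ⟨α, hα, rfl⟩ i
    simp only [rowContent_fatStaircase]
    exact stairRow_step α hα i
  · intro h
    obtain ⟨α, hα, h'⟩ := exists_stairRow (d.support.sup id + 1) d (fun i hi => by
      by_contra hne
      have : i ≤ d.support.sup id := le_sup (f := id) (Finsupp.mem_support_iff.2 hne)
      omega) h
    exact ⟨α, hα, by ext i; rw [rowContent_fatStaircase, h']⟩

/-! ### Littlewood–Richardson tableaux of shape `λ / (1^m)` -/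

lemma content_apply {D : Diagram} (T : SSYT D) (v : ℕ) :
    content T v = (D.filter (fun c => T.entry c = v)).card := by
  unfold content
  simp only [Finsupp.finsetSum_apply, Finsupp.single_apply]
  rw [← card_filter]

/-- The cells of a given diagram carrying the value `v` split into those of row `v` outside the
first column, and those of the first column. The predicate `P` is used for the reading order. -/
lemma card_filter_split {L : ℕ → ℕ} {l m : ℕ} (hpos : ∀ i, 0 < L i ↔ i < l) {D : Diagram}
    (hD : ∀ i j, (i, j) ∈ D ↔ j < L i ∧ ¬ (j = 0 ∧ i < m)) (f : ℕ × ℕ → ℕ)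
    (hf : ∀ i j, (i, j) ∈ D → 1 ≤ j → f (i, j) = i) (P : ℕ × ℕ → Prop) [DecidablePred P] (v : ℕ) :
    (D.filter (fun c => P c ∧ f c = v)).card =
      ((Ico 1 (L v)).filter (fun j => P (v, j))).card +
      ((Ico m l).filter (fun i => P (i, 0) ∧ f (i, 0) = v)).card := by
  have h : D.filter (fun c => P c ∧ f c = v) =
      ((Ico 1 (L v)).filter (fun j => P (v, j))).image (fun j => (v, j)) ∪
      ((Ico m l).filter (fun i => P (i, 0) ∧ f (i, 0) = v)).image (fun i => (i, 0)) := by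
    ext ⟨i, j⟩
    simp only [mem_filter, mem_union, mem_image, mem_Ico, Prod.mk.injEq]
    constructor
    · rintro ⟨hc, hP, hv⟩
      have hc' := (hD i j).1 hc
      rcases Nat.eq_zero_or_pos j with rfl | hj
      · right
        have := (hpos i).1 hc'.1
        exact ⟨i, ⟨⟨by omega, this⟩, hP, hv⟩, rfl, rfl⟩
      · left
        have := hf i j hc hj
        obtain rfl : i = v := by omega
        exact ⟨j, ⟨⟨hj, hc'.1⟩, hP⟩, rfl, rfl⟩
    · rintro (⟨j', ⟨⟨h1, h2⟩, hP⟩, rfl, rfl⟩ | ⟨i', ⟨⟨h1, h2⟩, hP, hv⟩, rfl, rfl⟩)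
      · have hc : (v, j') ∈ D := (hD _ _).2 ⟨h2, by omega⟩
        exact ⟨hc, hP, hf _ _ hc h1⟩
      · exact ⟨(hD _ _).2 ⟨(hpos _).2 h2, by omega⟩, hP, hv⟩
  rw [h, card_union_of_disjoint, card_image_of_injective _ (fun a b h => by simpa using h),
    card_image_of_injective _ (fun a b h => by simpa using h)]
  rw [disjoint_left]
  rintro ⟨i, j⟩ h1 h2
  simp only [mem_filter, mem_image, mem_Ico, Prod.mk.injEq] at h1 h2
  obtain ⟨j', ⟨⟨h1, -⟩, -⟩, -, rfl⟩ := h1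
  obtain ⟨i', -, -, h3⟩ := h2
  omega

/-- The content of a tableau whose cells outside the first column carry their row index. -/
lemma content_of_rows {L : ℕ → ℕ} {l m : ℕ} (hpos : ∀ i, 0 < L i ↔ i < l) {D : Diagram}
    (hD : ∀ i j, (i, j) ∈ D ↔ j < L i ∧ ¬ (j = 0 ∧ i < m)) (T : SSYT D)
    (hf : ∀ i j, (i, j) ∈ D → 1 ≤ j → T.entry (i, j) = i)
    (hinj : Set.InjOn (fun i => T.entry (i, 0)) (Ico m l)) (v : ℕ) :
    content T v = L v - 1 + if v ∈ (Ico m l).image (fun i => T.entry (i, 0)) then 1 else 0 := by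
  have h := card_filter_split hpos hD T.entry hf (fun _ => True) v
  simp only [true_and, filter_true, Nat.card_Ico] at h
  rw [content_apply, h]
  congr 1
  split_ifs with hv
  · obtain ⟨i, hi, rfl⟩ := mem_image.1 hv
    rw [card_eq_one]
    refine ⟨i, ?_⟩
    ext k
    simp only [mem_filter, mem_singleton]
    constructor
    · rintro ⟨hk, hki⟩; exact hinj (mem_coe.2 hk) (mem_coe.2 hi) hki
    · rintro rfl; exact ⟨hi, rfl⟩
  · rw [card_eq_zero, filter_eq_empty_iff]
    intro i hi h
    exact hv (mem_image.2 ⟨i, hi, h⟩)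

/-- One half of the Pieri rule: the content of a Littlewood–Richardson tableau of shape
`λ / (1^m)` is a partition obtained from `λ` by removing one cell from each of `m` rows.
The cells outside the first column are forced to carry their row index, so only the strictly
increasing first column is free. -/
lemma pieri_forward {L : ℕ → ℕ} {l m : ℕ} (hpos : ∀ i, 0 < L i ↔ i < l)
    (hanti : Antitone L) (hm : m < l) {D : Diagram}
    (hD : ∀ i j, (i, j) ∈ D ↔ j < L i ∧ ¬ (j = 0 ∧ i < m)) (T : SSYT D) (hT : IsLattice T) :
    (∀ v, content T (v + 1) ≤ content T v) ∧
    ∃ B ⊆ range l, B.card = m ∧ ∀ v, content T v + (if v ∈ B then 1 else 0) = L v := by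
  have hge : ∀ i j, (i, j) ∈ D → 1 ≤ j → i ≤ T.entry (i, j) := by
    intro i
    induction i with
    | zero => intros; omega
    | succ i ih =>
      intro j hc hj
      have h1 : (i, j) ∈ D := (hD _ _).2 ⟨((hD _ _).1 hc).1.trans_le (hanti (by omega)), by omega⟩
      have := ih j h1 hj
      have := T.colStrict i j h1 hc
      omega
  have hrow : ∀ i j j', j ≤ j' → (i, j) ∈ D → (i, j') ∈ D → T.entry (i, j) ≤ T.entry (i, j') := by
    intro i j j' hjj hc
    induction j', hjj using Nat.le_induction with
    | base => intro _; exact le_rfl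
    | succ k hk ih =>
      intro hck
      have h1 := (hD _ _).1 hc
      have h2 := (hD _ _).1 hck
      have h3 : (i, k) ∈ D := (hD _ _).2 ⟨by omega, by omega⟩
      exact (ih h3).trans (T.rowWeak i k h3 hck)
  -- A value exceeding the row index would first occur at the right end of a row,
  -- where its predecessor has not been read yet.
  have hle : ∀ i j, (i, j) ∈ D → T.entry (i, j) ≤ i := by
    intro i
    induction i using Nat.strong_induction_on with
    | _ i ih =>
      intro j hc
      by_contra hgt
      have h1 := (hD _ _).1 hc
      have hc' : (i, L i - 1) ∈ D := (hD _ _).2 ⟨by omega, by omega⟩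
      have h2 := hrow i j (L i - 1) (by omega) hc hc'
      obtain ⟨v, hv⟩ : ∃ v, T.entry (i, L i - 1) = v + 1 :=
        ⟨T.entry (i, L i - 1) - 1, by omega⟩
      have h3 := hT _ hc' v
      have h4 : 0 < (D.filter (fun c' => ReadBefore c' (i, L i - 1) ∧ T.entry c' = v + 1)).card :=
        card_pos.2 ⟨(i, L i - 1), mem_filter.2 ⟨hc', Or.inr ⟨rfl, le_rfl⟩, hv⟩⟩
      obtain ⟨⟨i', j'⟩, hmem⟩ := card_pos.1 (h4.trans_le h3)
      obtain ⟨hc'', hr, he⟩ := mem_filter.1 hmem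
      rcases hr with hr | ⟨hr, hr'⟩
      · have := ih i' hr j' hc''
        simp only at hr
        omega
      · simp only at hr hr'
        subst hr
        have := (hD _ _).1 hc''
        obtain rfl : j' = L i' - 1 := by omega
        omega
  have hf : ∀ i j, (i, j) ∈ D → 1 ≤ j → T.entry (i, j) = i :=
    fun i j hc hj => le_antisymm (hle i j hc) (hge i j hc hj)
  have hcol : ∀ i, m ≤ i → i < l → (i, 0) ∈ D :=
    fun i h1 h2 => (hD _ _).2 ⟨(hpos i).2 h2, by omega⟩
  have hmono : StrictMonoOn (fun i => T.entry (i, 0)) (Ico m l) := by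
    intro i hi i' hi' hlt
    simp only [coe_Ico, Set.mem_Ico] at hi hi'
    obtain ⟨hi0, hil⟩ := hi
    have : ∀ k, i + 1 ≤ k → k < l → T.entry (i, 0) < T.entry (k, 0) := by
      intro k hk
      induction k, hk using Nat.le_induction with
      | base => intro h; exact T.colStrict i 0 (hcol _ hi0 hil) (hcol _ (by omega) h)
      | succ k hk ih =>
        intro h
        exact (ih (by omega)).trans
          (T.colStrict k 0 (hcol _ (by omega) (by omega)) (hcol _ (by omega) h))
    exact this i' hlt hi'.2
  have hcont := content_of_rows hpos hD T hf hmono.injOn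
  set A := (Ico m l).image (fun i => T.entry (i, 0)) with hA
  have hAcard : A.card = l - m := by
    rw [hA, card_image_of_injOn hmono.injOn, Nat.card_Ico]
  have hAsub : A ⊆ range l := by
    intro v hv
    obtain ⟨i, hi, rfl⟩ := mem_image.1 hv
    have := mem_Ico.1 hi
    have := hle i 0 (hcol i this.1 this.2)
    simp only [mem_range]; omega
  refine ⟨fun v => ?_, range l \ A, sdiff_subset, ?_, fun v => ?_⟩
  · -- The bottom-left cell is read last.
    have h := hT (l - 1, 0) (hcol _ (by omega) (by omega)) v
    have hall : ∀ c ∈ D, ReadBefore c (l - 1, 0) := by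
      rintro ⟨i, j⟩ hc
      have := (hD _ _).1 hc
      have := (hpos i).1 (by omega)
      unfold ReadBefore
      simp only
      omega
    rw [content_apply, content_apply]
    have hfil : ∀ w, D.filter (fun c' => ReadBefore c' (l - 1, 0) ∧ T.entry c' = w) =
        D.filter (fun c => T.entry c = w) :=
      fun w => filter_congr fun c hc => by simp [hall c hc]
    rwa [hfil, hfil] at h
  · rw [card_sdiff_of_subset hAsub, hAcard, card_range]; omega
  · rw [hcont v]
    have h1 := hpos v
    by_cases hv : v ∈ A
    · have h2 := mem_range.1 (hAsub hv)
      simp [hv]; omega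
    · by_cases hl : v < l
      · simp [hv, hl]; omega
      · simp [hv, hl]; omega

/-- The increasing enumeration of a set of `l - m` numbers below `l`, indexed by `m, …, l - 1`. -/
lemma exists_enum {l m : ℕ} {A : Finset ℕ} (hA : A ⊆ range l)
    (hc : A.card = l - m) : ∃ a : ℕ → ℕ, StrictMonoOn a (Ico m l) ∧
      (Ico m l).image a = A ∧ ∀ i ∈ Ico m l, a i ≤ i := by
  have hfin : {x | x ∈ A}.Finite := A.finite_toSet
  have hcard : hfin.toFinset.card = l - m := by
    rw [← hc]; congr 1; ext; simp
  have hmono : StrictMonoOn (fun i => Nat.nth (· ∈ A) (i - m)) (Ico m l) := by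
    intro i hi j hj hij
    simp only [coe_Ico, Set.mem_Ico] at hi hj
    exact Nat.nth_strictMonoOn hfin (by rw [Set.mem_Iio, hcard]; omega)
      (by rw [Set.mem_Iio, hcard]; omega) (by omega)
  have hmem : ∀ i ∈ Ico m l, Nat.nth (· ∈ A) (i - m) ∈ A := by
    intro i hi
    have := mem_Ico.1 hi
    exact Nat.nth_mem_of_lt_card hfin (by rw [hcard]; omega)
  refine ⟨fun i => Nat.nth (· ∈ A) (i - m), hmono, ?_, ?_⟩
  · apply eq_of_subset_of_card_le
    · intro v hv
      obtain ⟨i, hi, rfl⟩ := mem_image.1 hv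
      exact hmem i hi
    · rw [card_image_of_injOn hmono.injOn, Nat.card_Ico, hc]
  · -- The `l - i` values from index `i` on are distinct and lie in `[a i, l)`.
    intro i hi
    have hi' := mem_Ico.1 hi
    have hsub : (Ico i l).image (fun i => Nat.nth (· ∈ A) (i - m)) ⊆
        Ico (Nat.nth (· ∈ A) (i - m)) l := by
      intro v hv
      obtain ⟨k, hk, rfl⟩ := mem_image.1 hv
      have hk' := mem_Ico.1 hk
      have hk2 : k ∈ Ico m l := mem_Ico.2 ⟨by omega, hk'.2⟩
      exact mem_Ico.2 ⟨hmono.monotoneOn (mem_coe.2 hi) (mem_coe.2 hk2) hk'.1,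
        mem_range.1 (hA (hmem k hk2))⟩
    have := card_le_card hsub
    rw [card_image_of_injOn (hmono.injOn.mono (by
      intro k hk
      simp only [coe_Ico, Set.mem_Ico] at hk ⊢
      omega)), Nat.card_Ico, Nat.card_Ico] at this
    simp only
    omega

/-- The other half of the Pieri rule: every partition obtained from `λ` by removing one cell from
each of `m` rows is the content of a Littlewood–Richardson tableau of shape `λ / (1^m)`. The first
column lists the rows that keep all their cells. -/
lemma pieri_backward {L : ℕ → ℕ} {l m : ℕ} (hpos : ∀ i, 0 < L i ↔ i < l)
    (hanti : Antitone L) {D : Diagram}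
    (hD : ∀ i j, (i, j) ∈ D ↔ j < L i ∧ ¬ (j = 0 ∧ i < m)) (d : ℕ →₀ ℕ)
    (hd : ∀ v, d (v + 1) ≤ d v) (B : Finset ℕ) (hB : B ⊆ range l) (hBc : B.card = m)
    (hdB : ∀ v, d v + (if v ∈ B then 1 else 0) = L v) :
    ∃ T : SSYT D, IsLattice T ∧ content T = d := by
  obtain ⟨a, hmono, himg, hale⟩ := exists_enum (l := l) (m := m) (A := range l \ B) sdiff_subset
    (by rw [card_sdiff_of_subset hB, card_range, hBc])
  have hrow : ∀ i, (i, 0) ∈ D → i ∈ Ico m l := by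
    intro i hi
    have h := (hD _ _).1 hi
    have := (hpos i).1 h.1
    exact mem_Ico.2 ⟨by omega, this⟩
  let T : SSYT D :=
    { entry := fun c => if c ∈ D then (if c.2 = 0 then a c.1 else c.1) else 0
      rowWeak := by
        intro i j h1 h2
        simp only [h1, h2, if_true]
        rcases Nat.eq_zero_or_pos j with rfl | hj
        · simpa using hale i (hrow i h1)
        · rw [if_neg (by omega), if_neg (by omega)]
      colStrict := by
        intro i j h1 h2
        simp only [h1, h2, if_true]
        rcases Nat.eq_zero_or_pos j with rfl | hj
        · simpa using hmono (mem_coe.2 (hrow _ h1)) (mem_coe.2 (hrow _ h2)) (by omega)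
        · rw [if_neg (by omega), if_neg (by omega)]; omega
      zero_outside := fun c hc => if_neg hc }
  have hf : ∀ i j, (i, j) ∈ D → 1 ≤ j → T.entry (i, j) = i := by
    intro i j h hj
    change (if (i, j) ∈ D then (if j = 0 then a i else i) else 0) = i
    rw [if_pos h, if_neg (by omega)]
  have hcell : ∀ i ∈ Ico m l, (i, 0) ∈ D := by
    intro i hi
    have := mem_Ico.1 hi
    exact (hD _ _).2 ⟨(hpos _).2 this.2, by omega⟩
  have hcol : ∀ i ∈ Ico m l, T.entry (i, 0) = a i := by
    intro i hi
    change (if (i, 0) ∈ D then (if 0 = 0 then a i else i) else 0) = a i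
    rw [if_pos (hcell i hi), if_pos rfl]
  have hle : ∀ i j, (i, j) ∈ D → T.entry (i, j) ≤ i := by
    intro i j h
    rcases Nat.eq_zero_or_pos j with rfl | hj
    · rw [hcol i (hrow i h)]; exact hale i (hrow i h)
    · exact (hf i j h hj).le
  refine ⟨T, ?_, ?_⟩
  · rintro ⟨i₀, j₀⟩ hc v
    rcases le_or_gt (v + 1) i₀ with hv | hv
    · rw [card_filter_split hpos hD T.entry hf (fun c => ReadBefore c (i₀, j₀)),
        card_filter_split hpos hD T.entry hf (fun c => ReadBefore c (i₀, j₀))]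
      -- Row `v` has been read completely.
      have h1 : ((Ico 1 (L v)).filter (fun j => ReadBefore (v, j) (i₀, j₀))).card = L v - 1 := by
        rw [filter_true_of_mem, Nat.card_Ico]
        intro j _
        exact Or.inl hv
      have h2 : ((Ico 1 (L (v + 1))).filter (fun j => ReadBefore (v + 1, j) (i₀, j₀))).card
          ≤ L (v + 1) - 1 := (card_filter_le _ _).trans (by rw [Nat.card_Ico])
      have hL : L (v + 1) ≤ L v := hanti (by omega)
      rw [h1]
      set C := (Ico m l).filter
        (fun i => ReadBefore (i, 0) (i₀, j₀) ∧ T.entry (i, 0) = v + 1) with hCdef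
      rcases C.eq_empty_or_nonempty with hC | ⟨i, hi⟩
      · rw [hC, card_empty]; omega
      · obtain ⟨hi, hr, he⟩ := mem_filter.1 hi
        have hC1 : C.card ≤ 1 := by
          rw [card_le_one]
          intro x hx y hy
          obtain ⟨hx, -, hx'⟩ := mem_filter.1 hx
          obtain ⟨hy, -, hy'⟩ := mem_filter.1 hy
          rw [hcol _ hx] at hx'
          rw [hcol _ hy] at hy'
          exact hmono.injOn (mem_coe.2 hx) (mem_coe.2 hy) (hx'.trans hy'.symm)
        rw [hcol i hi] at he
        have hvA : v + 1 ∈ range l \ B := by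
          rw [← himg, ← he]; exact mem_image_of_mem _ hi
        rw [mem_sdiff, mem_range] at hvA
        have hLpos := (hpos _).2 hvA.1
        by_cases hvB : v ∈ B
        · have e1 := hdB v
          have e2 := hdB (v + 1)
          rw [if_pos hvB] at e1
          rw [if_neg hvA.2] at e2
          have := hd v
          omega
        · -- If `v` and `v + 1` both occur in the first column, then `v` is read first.
          have hvA' : v ∈ (Ico m l).image a := by
            rw [himg, mem_sdiff, mem_range]; exact ⟨by omega, hvB⟩
          obtain ⟨k, hk, hkv⟩ := mem_image.1 hvA'
          have hki : k < i := by
            rw [← hmono.lt_iff_lt (mem_coe.2 hk) (mem_coe.2 hi)]; omega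
          have : 0 < ((Ico m l).filter
              (fun i => ReadBefore (i, 0) (i₀, j₀) ∧ T.entry (i, 0) = v)).card := by
            refine card_pos.2 ⟨k, mem_filter.2 ⟨hk, ?_, by rw [hcol k hk, hkv]⟩⟩
            unfold ReadBefore at hr ⊢
            simp only at hr ⊢
            omega
          omega
    · -- Entries are at most their row index, so `v + 1` has not been read yet.
      rw [filter_false_of_mem]
      · simp
      · rintro ⟨i, j⟩ hc' ⟨hr, he⟩
        have := hle i j hc'
        unfold ReadBefore at hr
        simp only at hr
        omega
  · ext v
    have himg' : (Ico m l).image (fun i => T.entry (i, 0)) = range l \ B := by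
      rw [← himg]; exact image_congr (fun i hi => hcol i (mem_coe.1 hi))
    have hinj : Set.InjOn (fun i => T.entry (i, 0)) (Ico m l) := by
      intro x hx y hy hxy
      simp only [hcol x (mem_coe.1 hx), hcol y (mem_coe.1 hy)] at hxy
      exact hmono.injOn hx hy hxy
    rw [content_of_rows hpos hD T hf hinj, himg']
    have e := hdB v
    have h1 := hpos v
    by_cases hvB : v ∈ B
    · simp only [hvB, if_true] at e
      simp [hvB]; omega
    · simp only [hvB, if_false] at e
      by_cases hl : v < l
      · simp [hvB, hl]; omega
      · simp [hl]; omega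

/-- There are finitely many tableaux of a given content, so `lrCount` is an honest count. -/
lemma lrCount_ne_zero_iff (D : Diagram) (d : ℕ →₀ ℕ) :
    lrCount D d ≠ 0 ↔ ∃ T : SSYT D, IsLattice T ∧ content T = d := by
  have hfin : Finite {T : SSYT D // IsLattice T ∧ content T = d} := by
    let F : {T : SSYT D // IsLattice T ∧ content T = d} → (D → d.support) := fun T c =>
      ⟨T.1.entry c, by
        rw [Finsupp.mem_support_iff, ← DFunLike.congr_fun T.2.2, content_apply]
        have hc : c.1 ∈ D.filter (fun c' => T.1.entry c' = T.1.entry c) :=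
          mem_filter.2 ⟨c.2, rfl⟩
        exact (card_pos.2 ⟨c.1, hc⟩).ne'⟩
    refine Finite.of_injective F ?_
    rintro ⟨T, hT⟩ ⟨T', hT'⟩ h
    have he : T.entry = T'.entry := by
      funext c
      by_cases hc : c ∈ D
      · exact congrArg Subtype.val (congrFun h ⟨c, hc⟩)
      · rw [T.zero_outside c hc, T'.zero_outside c hc]
    cases T; cases T'
    simp only at he
    subst he
    rfl
  unfold lrCount
  rw [Nat.card_ne_zero]
  constructor
  · rintro ⟨⟨T, hT⟩, -⟩; exact ⟨T, hT⟩
  · rintro ⟨T, hT⟩; exact ⟨⟨⟨T, hT⟩⟩, hfin⟩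

/-! ### Removing one cell from `m` rows of a fat staircase -/

/-- If `p ≤ m ≤ l - q`, where `p` and `q` are the numbers of rows of length `x` and `y`, then `m`
rows can be chosen that include all rows of length `x`, none of length `y`, and that form a bottom
segment of each block of equal rows. Rows are added one at a time, the lowest available first. -/
lemma exists_rows (L : ℕ → ℕ) (l x y m : ℕ) (hxy : x ≠ y)
    (h1 : ((range l).filter (fun i => L i = x)).card ≤ m)
    (h2 : m + ((range l).filter (fun i => L i = y)).card ≤ l) :
    ∃ B ⊆ range l, B.card = m ∧ (∀ i < l, L i = x → i ∈ B) ∧ (∀ i ∈ B, L i ≠ y) ∧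
      ∀ i, i + 1 < l → L (i + 1) = L i → i ∈ B → i + 1 ∈ B := by
  induction m, h1 using Nat.le_induction with
  | base =>
    refine ⟨(range l).filter (fun i => L i = x), filter_subset _ _, rfl, ?_, ?_, ?_⟩
    · intro i hi hx; simp [hi, hx]
    · intro i hi; rw [(mem_filter.1 hi).2]; exact hxy
    · intro i hi he hiB
      have := (mem_filter.1 hiB).2
      simp [hi, he, this]
  | succ m hm ih =>
    obtain ⟨B, hB, hc, hBx, hBy, hcl⟩ := ih (by omega)
    have hne : (((range l).filter (fun i => L i ≠ y)) \ B).Nonempty := by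
      rw [← card_pos]
      have e1 := card_filter_add_card_filter_not (s := range l) (fun i => L i = y)
      rw [card_range] at e1
      have e2 := le_card_sdiff B ((range l).filter (fun i => L i ≠ y))
      simp only [ne_eq] at e2 ⊢
      omega
    have hz := max'_mem _ hne
    set z := max' _ hne with hzdef
    obtain ⟨hz1, hzB⟩ := mem_sdiff.1 hz
    obtain ⟨hzl, hzy⟩ := mem_filter.1 hz1
    refine ⟨insert z B, insert_subset hzl hB, by rw [card_insert_of_notMem hzB, hc],
      fun i hi hx => mem_insert_of_mem (hBx i hi hx), ?_, ?_⟩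
    · intro i hi
      rcases mem_insert.1 hi with rfl | hi
      · exact hzy
      · exact hBy i hi
    · intro i hi he hiB
      rcases mem_insert.1 hiB with rfl | hiB
      · by_contra hn
        have hn' : z + 1 ∉ B := fun h => hn (mem_insert_of_mem h)
        have hm' : z + 1 ∈ ((range l).filter (fun i => L i ≠ y)) \ B :=
          mem_sdiff.2 ⟨mem_filter.2 ⟨mem_range.2 hi, by rwa [he]⟩, hn'⟩
        have := le_max' _ (z + 1) hm'
        omega
      · exact mem_insert_of_mem (hcl i hi he hiB)

/-- for a composition `α` and `1 ≤ m < |α|`, the skew diagram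
`δ_α/(1^m)` is a sum of fat staircases iff there is no `j` (1-based, with
`1 ≤ j ≤ n-1`; below `j` is 0-based) with `α_j ≤ m ≤ |α| − α_{j+1}`. -/
theorem fatStaircase_skew_col_iff (α : List ℕ) (hα : ∀ a ∈ α, 0 < a) (hne : α ≠ [])
    (m : ℕ) (hm1 : 1 ≤ m) (hm2 : m < α.sum) :
    IsSumOfFatStaircases (fatStaircase α \ colD m) ↔
      ¬ ∃ j : ℕ, j + 1 < α.length ∧ α.getD j 0 ≤ m ∧ m ≤ α.sum - α.getD (j + 1) 0 := by
  have hanti : Antitone (stairRow α) := antitone_nat_of_succ_le fun i => (stairRow_step α hα i).1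
  have hpos := stairRow_pos_iff α
  have hD : ∀ i j, (i, j) ∈ fatStaircase α \ colD m ↔
      j < stairRow α i ∧ ¬ (j = 0 ∧ i < m) := by
    intro i j
    rw [mem_sdiff, mem_fatStaircase]
    refine and_congr_right fun _ => not_congr ?_
    simp only [colD, mem_image, mem_range, Prod.mk.injEq]
    constructor
    · rintro ⟨i', h, rfl, rfl⟩; exact ⟨rfl, h⟩
    · rintro ⟨rfl, h⟩; exact ⟨i, h, rfl, rfl⟩
  have hsplit : ∀ j, α.getD j 0 ≤ α.sum := by
    intro j
    rw [← card_stairRow_eq]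
    exact (card_filter_le _ _).trans (by rw [card_range])
  constructor
  · rintro hsum ⟨j, hj, hj1, hj2⟩
    have hle := hsplit (j + 1)
    obtain ⟨B, hB, hBc, hBx, hBy, hcl⟩ := exists_rows (stairRow α) α.sum (j + 1) (j + 1 + 1) m
      (by omega) (by rw [card_stairRow_eq]; exact hj1) (by rw [card_stairRow_eq]; omega)
    let d : ℕ →₀ ℕ := Finsupp.onFinset (range α.sum)
      (fun v => stairRow α v - if v ∈ B then 1 else 0) (fun v hv => by
        rw [mem_range, ← hpos]; omega)
    have hdB : ∀ v, d v + (if v ∈ B then 1 else 0) = stairRow α v := by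
      intro v
      change stairRow α v - (if v ∈ B then 1 else 0) + _ = _
      have h1 := hpos v
      by_cases hv : v ∈ B
      · have := mem_range.1 (hB hv)
        simp only [hv, if_true]; omega
      · simp [hv]
    have hd : ∀ v, d (v + 1) ≤ d v := by
      intro v
      have e1 := hdB v
      have e2 := hdB (v + 1)
      have h3 := (stairRow_step α hα v).1
      by_cases hv : v ∈ B
      · by_cases hv1 : v + 1 ∈ B
        · rw [if_pos hv] at e1; rw [if_pos hv1] at e2; omega
        · rw [if_pos hv] at e1; rw [if_neg hv1] at e2
          have h4 := hpos (v + 1)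
          have h5 := (hpos v).2 (mem_range.1 (hB hv))
          by_cases hl : v + 1 < α.sum
          · have : stairRow α (v + 1) ≠ stairRow α v := fun h => hv1 (hcl v hl h hv)
            omega
          · omega
      · rw [if_neg hv] at e1; omega
    have hfat := (isFatStaircase_iff d).1
      (hsum d ((lrCount_ne_zero_iff _ d).2 (pieri_backward hpos hanti hD d hd B hB hBc hdB)))
    -- The last row of length `j + 2` keeps its cells, the next one, of length `j + 1`, loses one.
    have hne' : ((range α.sum).filter (fun i => stairRow α i = j + 1 + 1)).Nonempty := by
      rw [← card_pos, card_stairRow_eq, List.getD_eq_getElem _ _ hj]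
      exact hα _ (List.getElem_mem _)
    have hz := max'_mem _ hne'
    set z := max' _ hne' with hzdef
    obtain ⟨hzl, hzj⟩ := mem_filter.1 hz
    have hst := stairRow_step α hα z
    have hz1 : z + 1 < α.sum := (hpos _).1 (by omega)
    have hz2 : stairRow α (z + 1) ≠ j + 1 + 1 := fun h => by
      have hm' : z + 1 ∈ (range α.sum).filter (fun i => stairRow α i = j + 1 + 1) :=
        mem_filter.2 ⟨mem_range.2 hz1, h⟩
      have := le_max' _ (z + 1) hm'
      omega
    have hz3 : stairRow α (z + 1) = j + 1 := by omega
    have e1 := hdB z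
    have e2 := hdB (z + 1)
    rw [if_neg (fun h => hBy z h hzj)] at e1
    rw [if_pos (hBx _ hz1 hz3)] at e2
    have := (hfat z).2
    omega
  · intro hno d hlr
    obtain ⟨T, hT, rfl⟩ := (lrCount_ne_zero_iff _ _).1 hlr
    obtain ⟨hd, B, hB, hBc, hdB⟩ := pieri_forward hpos hanti hm2 hD T hT
    rw [isFatStaircase_iff]
    intro i
    refine ⟨hd i, ?_⟩
    by_contra hgt
    apply hno
    have hdanti : Antitone (content T) := antitone_nat_of_succ_le hd
    have hst := stairRow_step α hα i
    have e1 := hdB i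
    have e2 := hdB (i + 1)
    -- A drop by two forces row `i + 1` to lose a cell and row `i` to keep all of its cells.
    have hi1 : i + 1 ∈ B := by
      by_contra h
      rw [if_neg h] at e2
      omega
    rw [if_pos hi1] at e2
    have hi0 : i ∉ B := by
      intro h
      rw [if_pos h] at e1
      omega
    rw [if_neg hi0] at e1
    have hj0 : stairRow α i ≤ α.length := by
      rw [← stairRow_zero α hα]; exact hanti (Nat.zero_le i)
    have hx : stairRow α (i + 1) = content T (i + 1) + 1 := by omega
    have hy : stairRow α i = content T (i + 1) + 1 + 1 := by omega
    refine ⟨content T (i + 1), by omega, ?_, ?_⟩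
    · rw [← card_stairRow_eq]
      refine (card_le_card fun r hr => ?_).trans hBc.le
      obtain ⟨-, hr⟩ := mem_filter.1 hr
      have hri : i + 1 ≤ r := by
        by_contra h
        have : stairRow α i ≤ stairRow α r := hanti (by omega)
        omega
      have h1 := hdanti hri
      have h2 := hdB r
      by_contra hrB
      rw [if_neg hrB] at h2
      omega
    · rw [← card_stairRow_eq]
      have hsub : (range α.sum).filter
          (fun r => stairRow α r = content T (i + 1) + 1 + 1) ⊆ range α.sum \ B := by
        intro r hr
        obtain ⟨hrl, hr⟩ := mem_filter.1 hr
        refine mem_sdiff.2 ⟨hrl, fun hrB => ?_⟩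
        have hri : r ≤ i := by
          by_contra h
          have : stairRow α r ≤ stairRow α (i + 1) := hanti (by omega)
          omega
        have h1 := hdanti hri
        have h2 := hdB r
        rw [if_pos hrB] at h2
        omega
      have := card_le_card hsub
      rw [card_sdiff_of_subset hB, card_range, hBc] at this
      omega
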